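/- For the four-vertex model with scalar-product boundary conditions on an L×M rectangle with N ≤ L paths, the AFP correlation function satisfies G_{L,M,N}(p,q) = F_{M−L+N+1, M, M−L+1}(r̃, L−p̃), where q̃ = p+q−L+N, r̃ = ⌊(q̃+1)/2⌋, and p̃ = p − ((q̃+1) mod 2), and F and G denote the Emptiness Formation Probability and Anti-ferroelectric phase Formation Probability respectively. -/

import Mathlib

/-- A configuration of the four-vertex model on an `L × M` rectangle with
scalar-product boundary conditions and `N` paths; `h`/`v` are the states of
the horizontal/vertical edges (see the vertex rule for the four allowed
local configurations). -/
structure FourVertexConfig (L M N : ℕ) where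
  h : ℤ × ℤ → Bool
  v : ℤ × ℤ → Bool
  h_support : ∀ n m : ℤ, (n < 1 ∨ (L : ℤ) ≤ n ∨ m < 1 ∨ (M : ℤ) < m) → h (n, m) = false
  v_support : ∀ n m : ℤ, (n < 1 ∨ (L : ℤ) < n ∨ m < 0 ∨ (M : ℤ) < m) → v (n, m) = false
  south : ∀ n : ℤ, 1 ≤ n → n ≤ (L : ℤ) → (v (n, 0) = true ↔ n ≤ (N : ℤ))
  north : ∀ n : ℤ, 1 ≤ n → n ≤ (L : ℤ) → (v (n, (M : ℤ)) = true ↔ (L : ℤ) - (N : ℤ) < n)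
  vertexRule : ∀ n m : ℤ, 1 ≤ n → n ≤ (L : ℤ) → 1 ≤ m → m ≤ (M : ℤ) →
    (h (n-1, m) = false ∧ v (n, m-1) = false ∧ h (n, m) = false ∧ v (n, m) = false) ∨
    (h (n-1, m) = false ∧ v (n, m-1) = true  ∧ h (n, m) = false ∧ v (n, m) = true) ∨
    (h (n-1, m) = false ∧ v (n, m-1) = true  ∧ h (n, m) = true  ∧ v (n, m) = false) ∨
    (h (n-1, m) = true  ∧ v (n, m-1) = false ∧ h (n, m) = false ∧ v (n, m) = true)

/-- Vertex of type `a`: all four incident edges thin. -/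
def isA {L M N : ℕ} (c : FourVertexConfig L M N) (nm : ℤ × ℤ) : Bool :=
  !c.h (nm.1 - 1, nm.2) && !c.v (nm.1, nm.2 - 1) && !c.h nm && !c.v nm

/-- Vertex of type `c`: one of the two turning vertices. -/
def isC {L M N : ℕ} (c : FourVertexConfig L M N) (nm : ℤ × ℤ) : Bool :=
  (!c.h (nm.1 - 1, nm.2) && c.v (nm.1, nm.2 - 1) && c.h nm && !c.v nm) ||
  (c.h (nm.1 - 1, nm.2) && !c.v (nm.1, nm.2 - 1) && !c.h nm && c.v nm)

/-- Emptiness Formation Probability `F_{L,M,N}(p,q)`: the probability, under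
the uniform measure on configurations, that the topmost `q` vertices of the
`p`-th vertical line which lie in the hexagonal domain (i.e. the vertices
`(p, m)` with `M-q+1 ≤ m ≤ M-L+N+p`) are all of type `a`. -/
noncomputable def EFP (L M N p q : ℕ) : ℚ :=
  (Nat.card { c : FourVertexConfig L M N //
      ∀ m : ℤ, (M : ℤ) - q + 1 ≤ m → m ≤ (M : ℤ) - L + N + p →
        isA c ((p : ℤ), m) = true } : ℚ) /
    (Nat.card (FourVertexConfig L M N) : ℚ)

/-- Anti-ferroelectric phase Formation Probability `G_{L,M,N}(p,q)`: the
probability that the same set of vertices are all of type `c`. -/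
noncomputable def AFP (L M N p q : ℕ) : ℚ :=
  (Nat.card { c : FourVertexConfig L M N //
      ∀ m : ℤ, (M : ℤ) - q + 1 ≤ m → m ≤ (M : ℤ) - L + N + p →
        isC c ((p : ℤ), m) = true } : ℚ) /
    (Nat.card (FourVertexConfig L M N) : ℚ)


namespace FV

/-- Height function: number of occupied vertical edges at level `m` in columns `1..n`. -/
noncomputable def H {L M N : ℕ} (c : FourVertexConfig L M N) (n m : ℤ) : ℤ :=
  ∑ x ∈ Finset.Icc 1 n, (if c.v (x, m) = true then (1 : ℤ) else 0)

section heights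
variable {L M N : ℕ} (c : FourVertexConfig L M N)

theorem H_nonpos {n : ℤ} (hn : n ≤ 0) (m : ℤ) : H c n m = 0 := by
  unfold H
  rw [Finset.Icc_eq_empty (by omega)]
  simp

theorem H_step (n m : ℤ) :
    H c n m = H c (n - 1) m + (if c.v (n, m) = true then (1 : ℤ) else 0) := by
  by_cases hn : n < 1
  · rw [H_nonpos c (by omega), H_nonpos c (by omega), c.v_support n m (Or.inl hn)]
    simp
  · have : Finset.Icc 1 n = insert n (Finset.Icc 1 (n - 1)) := by
      ext x
      simp only [Finset.mem_Icc, Finset.mem_insert]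
      omega
    unfold H
    rw [this, Finset.sum_insert (by simp), add_comm]

/-- Telescoping characterisation of the height function. -/
theorem H_unique (m : ℤ) (f : ℤ → ℤ) (h0 : f 0 = 0) (U : ℤ)
    (hf : ∀ n, 1 ≤ n → n ≤ U → f n = f (n - 1) + (if c.v (n, m) = true then (1 : ℤ) else 0))
    (n : ℤ) (hn : 0 ≤ n) (hnU : n ≤ U) : H c n m = f n := by
  induction n, hn using Int.leInduction with
  | base => rw [H_nonpos c le_rfl, h0]
  | succ k hk ih =>
    rw [H_step, hf (k + 1) (by omega) hnU]
    simp only [add_sub_cancel_right]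
    rw [ih (by omega)]

/-- Local rule, valid in every column. -/
theorem rule {n m : ℤ} (h1 : 1 ≤ m) (h2 : m ≤ M) :
    (c.h (n-1, m) = false ∧ c.v (n, m-1) = false ∧ c.h (n, m) = false ∧ c.v (n, m) = false) ∨
    (c.h (n-1, m) = false ∧ c.v (n, m-1) = true  ∧ c.h (n, m) = false ∧ c.v (n, m) = true) ∨
    (c.h (n-1, m) = false ∧ c.v (n, m-1) = true  ∧ c.h (n, m) = true  ∧ c.v (n, m) = false) ∨
    (c.h (n-1, m) = true  ∧ c.v (n, m-1) = false ∧ c.h (n, m) = false ∧ c.v (n, m) = true) := by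
  by_cases hn : 1 ≤ n ∧ n ≤ (L : ℤ)
  · exact c.vertexRule n m hn.1 hn.2 h1 h2
  · left
    exact ⟨c.h_support _ _ (by omega), c.v_support _ _ (by omega), c.h_support _ _ (by omega),
      c.v_support _ _ (by omega)⟩

theorem H_time {m : ℤ} (h1 : 1 ≤ m) (h2 : m ≤ M) (n : ℤ) :
    H c n (m - 1) = H c n m + (if c.h (n, m) = true then (1 : ℤ) else 0) := by
  by_cases hn : n ≤ 0
  · rw [H_nonpos c hn, H_nonpos c hn, c.h_support n m (by omega)]
    simp
  · have hn : 0 ≤ n := by omega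
    induction n, hn using Int.leInduction with
    | base => rw [H_nonpos c le_rfl, H_nonpos c le_rfl, c.h_support 0 m (by omega)]; simp
    | succ k hk ih =>
      have ih' : H c k (m - 1) = H c k m + (if c.h (k, m) = true then (1 : ℤ) else 0) := by
        by_cases hk0 : k ≤ 0
        · rw [H_nonpos c hk0, H_nonpos c hk0, c.h_support k m (by omega)]
          simp
        · exact ih hk0
      rw [H_step c (k + 1), H_step c (k + 1)]
      have := rule c (n := k + 1) h1 h2
      simp only [add_sub_cancel_right] at this ⊢
      rw [ih']
      rcases this with h | h | h | h <;> obtain ⟨a, b, d, e⟩ := h <;> simp [a, b, d, e]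

theorem H_mono (n m : ℤ) : H c (n - 1) m ≤ H c n m := by
  have := H_step c n m
  split_ifs at this <;> omega

theorem H_lip (n m : ℤ) : H c n m ≤ H c (n - 1) m + 1 := by
  have := H_step c n m
  split_ifs at this <;> omega

theorem H_anti {m : ℤ} (h1 : 1 ≤ m) (h2 : m ≤ M) (n : ℤ) : H c n m ≤ H c n (m - 1) := by
  have := H_time c h1 h2 n
  split_ifs at this <;> omega

theorem H_diag {m : ℤ} (h1 : 1 ≤ m) (h2 : m ≤ M) (n : ℤ) :
    H c (n - 1) (m - 1) ≤ H c n m := by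
  have a1 := H_time c h1 h2 n
  have a2 := H_step c n (m - 1)
  rcases rule c (n := n) h1 h2 with h | h | h | h <;> obtain ⟨a, b, d, e⟩ := h <;>
    simp [b, d] at a1 a2 <;> omega

theorem H_adiag {m : ℤ} (h1 : 1 ≤ m) (h2 : m ≤ M) (n : ℤ) :
    H c n (m - 1) ≤ H c (n - 1) m + 1 := by
  have a1 := H_time c h1 h2 n
  have a2 := H_step c n m
  rcases rule c (n := n) h1 h2 with h | h | h | h <;> obtain ⟨a, b, d, e⟩ := h <;>
    simp [d, e] at a1 a2 <;> omega

/-- Bottom boundary. -/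
theorem H_south (hNL : N ≤ L) {n : ℤ} (hn : 0 ≤ n) (hL : n ≤ L) : H c n 0 = min n N := by
  refine H_unique c 0 (fun n => min n N) (by simp) L ?_ n hn hL
  intro n h1 h2
  have := c.south n h1 h2
  simp only [this]
  split_ifs <;> omega

/-- Top boundary. -/
theorem H_north (hNL : N ≤ L) {n : ℤ} (hn : 0 ≤ n) (hL : n ≤ L) :
    H c n M = max 0 (n - (L - N)) := by
  refine H_unique c M (fun n => max 0 (n - (L - N))) (by simp; omega) L ?_ n hn hL
  intro n h1 h2
  have := c.north n h1 h2
  simp only [this]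
  split_ifs <;> omega

theorem H_le_self {n : ℤ} (hn : 0 ≤ n) (m : ℤ) : H c n m ≤ n := by
  induction n, hn using Int.leInduction with
  | base => rw [H_nonpos c le_rfl]
  | succ k hk ih =>
    have := H_lip c (k + 1) m
    simp only [add_sub_cancel_right] at this
    omega

theorem H_anti_le {m m' : ℤ} (h : m ≤ m') (h0 : 0 ≤ m) (h2 : m' ≤ M) (n : ℤ) :
    H c n m' ≤ H c n m := by
  induction m', h using Int.leInduction with
  | base => exact le_rfl
  | succ k hk ih =>
    have := H_anti c (m := k + 1) (by omega) h2 n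
    simp only [add_sub_cancel_right] at this
    exact this.trans (ih (by omega))

theorem H_mono_le {n n' : ℤ} (h : n ≤ n') (m : ℤ) : H c n m ≤ H c n' m := by
  induction n', h using Int.leInduction with
  | base => exact le_rfl
  | succ k hk ih =>
    have := H_mono c (k + 1) m
    simp only [add_sub_cancel_right] at this
    exact ih.trans this

theorem H_diag_k (k : ℕ) {n m : ℤ} (h0 : 0 ≤ m) (h2 : m + k ≤ M) :
    H c n m ≤ H c (n + k) (m + k) := by
  induction k with
  | zero => simp
  | succ k ih =>
    have := H_diag c (m := m + (k + 1 : ℕ)) (by push_cast; omega) h2 (n + (k + 1 : ℕ))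
    have e1 : n + ((k + 1 : ℕ) : ℤ) - 1 = n + k := by push_cast; ring
    have e2 : m + ((k + 1 : ℕ) : ℤ) - 1 = m + k := by push_cast; ring
    rw [e1, e2] at this
    exact (ih (by push_cast at h2; omega)).trans this

theorem H_adiag_k (k : ℕ) {n m : ℤ} (h0 : 0 ≤ m) (h2 : m + k ≤ M) :
    H c n m ≤ H c (n - k) (m + k) + k := by
  induction k with
  | zero => simp
  | succ k ih =>
    have := H_adiag c (m := m + (k + 1 : ℕ)) (by push_cast; omega) h2 (n - k)
    have e1 : n - ((k + 1 : ℕ) : ℤ) = n - k - 1 := by push_cast; ring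
    have e2 : m + ((k + 1 : ℕ) : ℤ) - 1 = m + k := by push_cast; ring
    rw [e2] at this
    rw [e1]
    have := ih (by push_cast at h2; omega)
    push_cast at *
    omega

/-- Upper bound near the north-west corner. -/
theorem H_upper (hNL : N ≤ L) (s u : ℕ) (h : (s : ℤ) + u ≤ M) :
    H c ((L : ℤ) - N - s + u) ((M : ℤ) - s - u) ≤ u := by
  have a := H_adiag_k c u (n := (L : ℤ) - N - s + u) (m := (M : ℤ) - s - u) (by omega) (by omega)
  have b := H_diag_k c s (n := (L : ℤ) - N - s) (m := (M : ℤ) - s) (by omega) (by omega)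
  have e := H_north c hNL (n := (L : ℤ) - N) (by omega) (by omega)
  have e1 : (L : ℤ) - N - s + u - u = L - N - s := by ring
  have e2 : (M : ℤ) - s - u + u = M - s := by ring
  have e3 : (L : ℤ) - N - s + s = L - N := by ring
  have e4 : (M : ℤ) - s + s = M := by ring
  rw [e1, e2] at a
  rw [e3, e4, e] at b
  simp at b
  omega

/-- Lower bound near the south corner. -/
theorem H_lower (hNL : N ≤ L) (s u : ℕ) (h : (s : ℤ) + u ≤ M) :
    (N : ℤ) - u ≤ H c ((N : ℤ) + s - u) ((s : ℤ) + u) := by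
  have a := H_adiag_k c u (n := (N : ℤ) + s) (m := (s : ℤ)) (by omega) (by omega)
  have b := H_diag_k c s (n := (N : ℤ)) (m := 0) (by omega) (by omega)
  have e := H_south c hNL (n := (N : ℤ)) (by omega) (by omega)
  rw [e] at b
  simp at b
  omega

theorem H_le_N (hNL : N ≤ L) {n m : ℤ} (hn : n ≤ L) (h0 : 0 ≤ m) (hm : m ≤ M) :
    H c n m ≤ N := by
  have a := H_mono_le c hn m
  have b := H_anti_le c h0 le_rfl hm (L : ℤ)
  have e := H_south c hNL (n := (L : ℤ)) (by omega) le_rfl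
  omega

theorem H_nonneg (n m : ℤ) : 0 ≤ H c n m := by
  unfold H
  exact Finset.sum_nonneg (fun x _ => by split_ifs <;> simp)

end heights

/-- Plane partitions in an `A × B × C` box, encoded by their set of cells and canonically extended
to `ℤ³`. -/
structure PP (A B C : ℤ) where
  D : ℤ → ℤ → ℤ → Prop
  i_lo : ∀ i j k, i ≤ 0 → D i j k
  i_hi : ∀ i j k, A < i → ¬ D i j k
  j_lo : ∀ i j k, 1 ≤ i → i ≤ A → j ≤ 0 → ¬ D i j k
  j_hi : ∀ i j k, 1 ≤ i → i ≤ A → B < j → D i j k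
  k_lo : ∀ i j k, 1 ≤ i → i ≤ A → 1 ≤ j → j ≤ B → k ≤ 0 → D i j k
  k_hi : ∀ i j k, 1 ≤ i → i ≤ A → 1 ≤ j → j ≤ B → C < k → ¬ D i j k
  mi : ∀ i j k, D (i + 1) j k → D i j k
  mj : ∀ i j k, D i j k → D i (j + 1) k
  mk' : ∀ i j k, D i j (k + 1) → D i j k

namespace PP

theorem ext_box {A B C : ℤ} (x y : PP A B C)
    (h : ∀ i j k, 1 ≤ i → i ≤ A → 1 ≤ j → j ≤ B → 1 ≤ k → k ≤ C → (x.D i j k ↔ y.D i j k)) :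
    x = y := by
  have hD : x.D = y.D := by
    funext i j k
    apply propext
    by_cases h1 : i ≤ 0
    · exact iff_of_true (x.i_lo _ _ _ h1) (y.i_lo _ _ _ h1)
    by_cases h2 : A < i
    · exact iff_of_false (x.i_hi _ _ _ h2) (y.i_hi _ _ _ h2)
    push Not at h1 h2
    by_cases h3 : j ≤ 0
    · exact iff_of_false (x.j_lo _ _ _ h1 h2 h3) (y.j_lo _ _ _ h1 h2 h3)
    by_cases h4 : B < j
    · exact iff_of_true (x.j_hi _ _ _ h1 h2 h4) (y.j_hi _ _ _ h1 h2 h4)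
    push Not at h3 h4
    by_cases h5 : k ≤ 0
    · exact iff_of_true (x.k_lo _ _ _ h1 h2 h3 h4 h5) (y.k_lo _ _ _ h1 h2 h3 h4 h5)
    by_cases h6 : C < k
    · exact iff_of_false (x.k_hi _ _ _ h1 h2 h3 h4 h6) (y.k_hi _ _ _ h1 h2 h3 h4 h6)
    push Not at h5 h6
    exact h i j k h1 h2 h3 h4 h5 h6
  cases x
  cases y
  simp only at hD
  subst hD
  rfl

/-- Build a plane partition from a predicate that is monotone inside the box. -/
def ofBox (A B C : ℤ) (hA : 0 ≤ A) (hB : 0 ≤ B) (hC : 0 ≤ C) (P : ℤ → ℤ → ℤ → Prop)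
    (hi : ∀ i j k, 1 ≤ i → i + 1 ≤ A → 1 ≤ j → j ≤ B → 1 ≤ k → k ≤ C → P (i + 1) j k → P i j k)
    (hj : ∀ i j k, 1 ≤ i → i ≤ A → 1 ≤ j → j + 1 ≤ B → 1 ≤ k → k ≤ C → P i j k → P i (j + 1) k)
    (hk : ∀ i j k, 1 ≤ i → i ≤ A → 1 ≤ j → j ≤ B → 1 ≤ k → k + 1 ≤ C → P i j (k + 1) → P i j k) :
    PP A B C where
  D i j k := i ≤ 0 ∨ (i ≤ A ∧ (B < j ∨ (1 ≤ j ∧ (k ≤ 0 ∨ (k ≤ C ∧ P i j k)))))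
  i_lo i j k h := Or.inl h
  i_hi i j k h := by omega
  j_lo i j k h1 h2 h3 := by omega
  j_hi i j k h1 h2 h3 := by omega
  k_lo i j k h1 h2 h3 h4 h5 := by omega
  k_hi i j k h1 h2 h3 h4 h5 := by omega
  mi i j k h := by
    have := hi i j k
    grind
  mj i j k h := by
    have := hj i j k
    grind
  mk' i j k h := by
    have := hk i j k
    grind

theorem ofBox_D {A B C : ℤ} {hA : 0 ≤ A} {hB : 0 ≤ B} {hC : 0 ≤ C} {P : ℤ → ℤ → ℤ → Prop} {hi hj hk}
    {i j k : ℤ} (h1 : 1 ≤ i) (h2 : i ≤ A) (h3 : 1 ≤ j) (h4 : j ≤ B) (h5 : 1 ≤ k) (h6 : k ≤ C) :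
    (ofBox A B C hA hB hC P hi hj hk).D i j k ↔ P i j k := by
  simp only [ofBox]
  grind

/-- The cyclic rotation of a plane partition (combined with complementation). -/
def rot {A B C : ℤ} (hA : 0 ≤ A) (hB : 0 ≤ B) (hC : 0 ≤ C) (x : PP A B C) : PP C A B :=
  ofBox C A B hC hA hB (fun a b c => ¬ x.D b c (C + 1 - a))
    (fun a b c _ _ _ _ _ _ h hneg => h (x.mk' _ _ _ (by
      rw [show C + 1 - (a + 1) + 1 = C + 1 - a by ring]; exact hneg)))
    (fun a b c _ _ _ _ _ _ h hneg => h (x.mi _ _ _ hneg))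
    (fun a b c _ _ _ _ _ _ h hneg => h (x.mj _ _ _ hneg))

/-- The inverse rotation. -/
def unrot {A B C : ℤ} (hA : 0 ≤ A) (hB : 0 ≤ B) (hC : 0 ≤ C) (y : PP C A B) : PP A B C :=
  ofBox A B C hA hB hC (fun i j k => ¬ y.D (C + 1 - k) i j)
    (fun i j k _ _ _ _ _ _ h hneg => h (y.mj _ _ _ hneg))
    (fun i j k _ _ _ _ _ _ h hneg => h (y.mk' _ _ _ hneg))
    (fun i j k _ _ _ _ _ _ h hneg => h (y.mi _ _ _ (by
      rw [show C + 1 - (k + 1) + 1 = C + 1 - k by ring]; exact hneg)))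

/-- Rotation as an equivalence. -/
def rotEquiv {A B C : ℤ} (hA : 0 ≤ A) (hB : 0 ≤ B) (hC : 0 ≤ C) : PP A B C ≃ PP C A B where
  toFun := rot hA hB hC
  invFun := unrot hA hB hC
  left_inv x := by
    apply ext_box
    intro i j k h1 h2 h3 h4 h5 h6
    unfold unrot
    rw [ofBox_D h1 h2 h3 h4 h5 h6]
    unfold rot
    rw [ofBox_D (by omega) (by omega) h1 h2 h3 h4]
    simp
  right_inv y := by
    apply ext_box
    intro i j k h1 h2 h3 h4 h5 h6
    unfold rot
    rw [ofBox_D h1 h2 h3 h4 h5 h6]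
    unfold unrot
    rw [ofBox_D h3 h4 h5 h6 (by omega) (by omega)]
    simp

section toHeights
variable {A B C : ℤ} (x : PP A B C)

/-- Height threshold predicate of a plane partition. -/
def E (i n m : ℤ) : Prop := x.D i (n + 1 - i) (m - A + 2 * i - n)

theorem E_anti (i n m : ℤ) (h : x.E (i + 1) n m) : x.E i n m := by
  unfold E at *
  have h1 := x.mj _ _ _ (x.mi _ _ _ h)
  rw [show n + 1 - (i + 1) + 1 = n + 1 - i by ring,
    show m - A + 2 * (i + 1) - n = m - A + 2 * i - n + 1 + 1 by ring] at h1
  exact x.mk' _ _ _ (x.mk' _ _ _ h1)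

theorem E_anti_le {i i' : ℤ} (hi : i ≤ i') (n m : ℤ) (h : x.E i' n m) : x.E i n m := by
  induction i', hi using Int.leInduction with
  | base => exact h
  | succ k hk ih => exact ih (x.E_anti _ _ _ h)

open Classical in
/-- Height function of a plane partition. -/
noncomputable def HD (n m : ℤ) : ℤ :=
  (((Finset.Icc 1 A).filter (fun i => x.E i n m)).card : ℤ)

theorem HD_nonneg (n m : ℤ) : 0 ≤ x.HD n m := by
  unfold HD
  positivity

theorem HD_le (hA : 0 ≤ A) (n m : ℤ) : x.HD n m ≤ A := by
  classical
  unfold HD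
  have := Finset.card_filter_le (Finset.Icc 1 A) (fun i => x.E i n m)
  rw [Int.card_Icc] at this
  omega

theorem le_HD {i : ℤ} (h1 : 1 ≤ i) (h2 : i ≤ A) (n m : ℤ) : i ≤ x.HD n m ↔ x.E i n m := by
  classical
  unfold HD
  constructor
  · intro h
    by_contra hE
    have hs : (Finset.Icc 1 A).filter (fun i => x.E i n m) ⊆ Finset.Icc 1 (i - 1) := by
      intro a ha
      simp only [Finset.mem_filter, Finset.mem_Icc] at ha ⊢
      refine ⟨ha.1.1, ?_⟩
      by_contra hlt
      exact hE (x.E_anti_le (by omega) n m ha.2)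
    have := Finset.card_le_card hs
    rw [Int.card_Icc] at this
    omega
  · intro hE
    have hs : Finset.Icc 1 i ⊆ (Finset.Icc 1 A).filter (fun i => x.E i n m) := by
      intro a ha
      simp only [Finset.mem_filter, Finset.mem_Icc] at ha ⊢
      exact ⟨⟨ha.1, by omega⟩, x.E_anti_le ha.2 n m hE⟩
    have := Finset.card_le_card hs
    rw [Int.card_Icc] at this
    omega

theorem HD_eq (hA : 0 ≤ A) (n m t : ℤ) (h0 : 0 ≤ t) (h1 : t ≤ A)
    (h : ∀ i, 1 ≤ i → i ≤ A → (x.E i n m ↔ i ≤ t)) : x.HD n m = t := by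
  have a1 := x.HD_nonneg n m
  have a2 := x.HD_le hA n m
  by_contra hne
  rcases lt_or_gt_of_ne hne with hlt | hlt
  · have := (h t (by omega) h1).2 le_rfl
    rw [← x.le_HD (by omega) h1] at this
    omega
  · have := (x.le_HD (i := x.HD n m) (by omega) a2 n m).1 le_rfl
    rw [h _ (by omega) a2] at this
    omega

theorem HD_diag (hA : 0 ≤ A) (n m : ℤ) : x.HD (n - 1) (m - 1) ≤ x.HD n m := by
  by_contra hlt
  have a1 := x.HD_nonneg n m
  have a2 := x.HD_le hA (n - 1) (m - 1)
  have h := (x.le_HD (i := x.HD (n - 1) (m - 1)) (by omega) a2 _ _).1 le_rfl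
  have : x.E (x.HD (n - 1) (m - 1)) n m := by
    generalize x.HD (n - 1) (m - 1) = i at h
    unfold E at *
    have := x.mj _ _ _ h
    convert this using 1 <;> ring
  rw [← x.le_HD (by omega) a2] at this
  exact hlt this

theorem HD_anti (hA : 0 ≤ A) (n m : ℤ) : x.HD n m ≤ x.HD n (m - 1) := by
  by_contra hlt
  have a1 := x.HD_nonneg n (m - 1)
  have a2 := x.HD_le hA n m
  have h := (x.le_HD (i := x.HD n m) (by omega) a2 _ _).1 le_rfl
  have : x.E (x.HD n m) n (m - 1) := by
    generalize x.HD n m = i at h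
    unfold E at *
    apply x.mk'
    convert h using 1
    ring
  rw [← x.le_HD (by omega) a2] at this
  exact hlt this

theorem HD_adiag (hA : 0 ≤ A) (n m : ℤ) : x.HD n (m - 1) ≤ x.HD (n - 1) m + 1 := by
  by_contra hlt
  have a1 := x.HD_nonneg (n - 1) m
  have a2 := x.HD_le hA n (m - 1)
  have h := (x.le_HD (i := x.HD n (m - 1)) (by omega) a2 _ _).1 le_rfl
  have : x.E (x.HD n (m - 1) - 1) (n - 1) m := by
    generalize x.HD n (m - 1) = i at h
    unfold E at *
    apply x.mi
    convert h using 1 <;> ring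
  rw [← x.le_HD (by omega) (by omega)] at this
  omega

theorem HD_mono (hA : 0 ≤ A) (n m : ℤ) : x.HD (n - 1) m ≤ x.HD n m := by
  have h1 := x.HD_diag hA n (m + 1)
  have h2 := x.HD_anti hA n (m + 1)
  simp only [add_sub_cancel_right] at h1 h2
  omega

theorem HD_zero (hA : 0 ≤ A) {n : ℤ} (hn : n ≤ 0) (m : ℤ) : x.HD n m = 0 := by
  apply x.HD_eq hA _ _ _ le_rfl hA
  intro i h1 h2
  exact iff_of_false (x.j_lo _ _ _ h1 h2 (by omega)) (by omega)

theorem HD_full (hA : 0 ≤ A) {n : ℤ} (hn : A + B ≤ n) (m : ℤ) : x.HD n m = A := by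
  apply x.HD_eq hA _ _ _ hA le_rfl
  intro i h1 h2
  exact iff_of_true (x.j_hi _ _ _ h1 h2 (by omega)) (by omega)

theorem HD_south (hA : 0 ≤ A) {n : ℤ} (hn : 0 ≤ n) : x.HD n 0 = min n A := by
  apply x.HD_eq hA _ _ _ (by omega) (by omega)
  intro i h1 h2
  unfold E
  by_cases h3 : n < i
  · exact iff_of_false (x.j_lo _ _ _ h1 h2 (by omega)) (by omega)
  by_cases h4 : B < n + 1 - i
  · exact iff_of_true (x.j_hi _ _ _ h1 h2 h4) (by omega)
  exact iff_of_true (x.k_lo _ _ _ h1 h2 (by omega) (by omega) (by omega)) (by omega)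

theorem HD_north (hA : 0 ≤ A) (hB : 0 ≤ B) {n : ℤ} (hn : 0 ≤ n) (hn2 : n ≤ A + B) :
    x.HD n (A + B + C - 1) = max 0 (n - B) := by
  apply x.HD_eq hA _ _ _ (by omega) (by omega)
  intro i h1 h2
  unfold E
  by_cases h3 : n < i
  · exact iff_of_false (x.j_lo _ _ _ h1 h2 (by omega)) (by omega)
  by_cases h4 : B < n + 1 - i
  · exact iff_of_true (x.j_hi _ _ _ h1 h2 h4) (by omega)
  exact iff_of_false (x.k_hi _ _ _ h1 h2 (by omega) (by omega) (by omega)) (by omega)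

end toHeights

end PP

/-- Compatibility of lattice parameters with box sizes. -/
structure Par (L M N : ℕ) (A B C : ℤ) : Prop where
  hA : A = N
  hB : B = L - N
  hC : C = M - L + 1
  hNL : N ≤ L
  hLM : L ≤ M

section equiv
variable {L M N : ℕ} {A B C : ℤ}

/-- The plane partition of a configuration. -/
noncomputable def toPP (P : Par L M N A B C) (c : FourVertexConfig L M N) : PP A B C :=
  PP.ofBox A B C (by have := P.hA; omega) (by have := P.hB; have := P.hNL; omega)
    (by have := P.hC; have := P.hLM; omega)
    (fun i j k => i ≤ H c (i + j - 1) (k + A - i + j - 1))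
    (by
      obtain ⟨hA, hB, hC, hNL, hLM⟩ := P
      intro i j k h1 h2 h3 h4 h5 h6 h
      have := H_adiag c (m := k + A - i + j - 1) (by omega) (by omega) (i + j)
      rw [show i + 1 + j - 1 = i + j by ring,
        show k + A - (i + 1) + j - 1 = k + A - i + j - 1 - 1 by ring] at h
      omega)
    (by
      obtain ⟨hA, hB, hC, hNL, hLM⟩ := P
      intro i j k h1 h2 h3 h4 h5 h6 h
      have := H_diag c (m := k + A - i + j) (by omega) (by omega) (i + j)
      rw [show i + (j + 1) - 1 = i + j by ring,
        show k + A - i + (j + 1) - 1 = k + A - i + j by ring]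
      omega)
    (by
      obtain ⟨hA, hB, hC, hNL, hLM⟩ := P
      intro i j k h1 h2 h3 h4 h5 h6 h
      have := H_anti c (m := k + A - i + j) (by omega) (by omega) (i + j - 1)
      rw [show k + 1 + A - i + j - 1 = k + A - i + j by ring] at h
      omega)

theorem toPP_iff (P : Par L M N A B C) (c : FourVertexConfig L M N) {i n m : ℤ} (h1 : 1 ≤ i)
    (h2 : i ≤ A) (hn0 : 0 ≤ n) (hnL : n ≤ L) (hm0 : 0 ≤ m) (hmM : m ≤ M) :
    (toPP P c).E i n m ↔ i ≤ H c n m := by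
  have P' := P
  obtain ⟨hA, hB, hC, hNL, hLM⟩ := P'
  unfold PP.E
  by_cases h3 : n < i
  · have := H_le_self c hn0 m
    exact iff_of_false ((toPP P c).j_lo _ _ _ h1 h2 (by omega)) (by omega)
  by_cases h4 : B < n + 1 - i
  · have a := H_anti_le c hmM hm0 le_rfl n
    have b := H_north c hNL hn0 hnL
    exact iff_of_true ((toPP P c).j_hi _ _ _ h1 h2 h4) (by omega)
  by_cases h5 : m - A + 2 * i - n ≤ 0
  · have a := H_lower c hNL (n - i).toNat (N - i).toNat (by omega)
    rw [show (((n - i).toNat : ℕ) : ℤ) = n - i by omega,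
      show (((N - i).toNat : ℕ) : ℤ) = N - i by omega,
      show (N : ℤ) + (n - i) - (N - i) = n by ring] at a
    have b := H_anti_le c (m := m) (m' := n - i + (N - i)) (by omega) hm0 (by omega) n
    exact iff_of_true ((toPP P c).k_lo _ _ _ h1 h2 (by omega) (by omega) h5) (by omega)
  by_cases h6 : C < m - A + 2 * i - n
  · have a := H_upper c hNL (B - (n + 1 - i)).toNat (i - 1).toNat (by omega)
    rw [show (((B - (n + 1 - i)).toNat : ℕ) : ℤ) = B - (n + 1 - i) by omega,
      show (((i - 1).toNat : ℕ) : ℤ) = i - 1 by omega,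
      show (L : ℤ) - N - (B - (n + 1 - i)) + (i - 1) = n by omega] at a
    have b := H_anti_le c (m := (M : ℤ) - (B - (n + 1 - i)) - (i - 1)) (m' := m)
      (by omega) (by omega) hmM n
    exact iff_of_false ((toPP P c).k_hi _ _ _ h1 h2 (by omega) (by omega) h6) (by omega)
  · unfold toPP
    rw [PP.ofBox_D h1 h2 (by omega) (by omega) (by omega) (by omega)]
    rw [show i + (n + 1 - i) - 1 = n by ring,
      show m - A + 2 * i - n + A - i + (n + 1 - i) - 1 = m by ring]

theorem HD_toPP (P : Par L M N A B C) (c : FourVertexConfig L M N) {n m : ℤ}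
    (hn0 : 0 ≤ n) (hnL : n ≤ L) (hm0 : 0 ≤ m) (hmM : m ≤ M) :
    (toPP P c).HD n m = H c n m := by
  have hA := P.hA
  have := H_le_N c P.hNL hnL hm0 hmM
  exact (toPP P c).HD_eq (by omega) _ _ _ (H_nonneg c n m) (by omega)
    (fun i h1 h2 => toPP_iff P c h1 h2 hn0 hnL hm0 hmM)

/-- The configuration of a plane partition. -/
noncomputable def ofPP (P : Par L M N A B C) (x : PP A B C) : FourVertexConfig L M N where
  h nm := decide (1 ≤ nm.1 ∧ nm.1 < L ∧ 1 ≤ nm.2 ∧ nm.2 ≤ M ∧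
    x.HD nm.1 nm.2 < x.HD nm.1 (nm.2 - 1))
  v nm := decide (1 ≤ nm.1 ∧ nm.1 ≤ L ∧ 0 ≤ nm.2 ∧ nm.2 ≤ M ∧
    x.HD (nm.1 - 1) nm.2 < x.HD nm.1 nm.2)
  h_support n m h := by
    simp only [decide_eq_false_iff_not]
    omega
  v_support n m h := by
    simp only [decide_eq_false_iff_not]
    omega
  south n h1 h2 := by
    obtain ⟨hA, hB, hC, hNL, hLM⟩ := P
    simp only [decide_eq_true_eq]
    rw [x.HD_south (by omega) (by omega), x.HD_south (by omega) (by omega)]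
    omega
  north n h1 h2 := by
    obtain ⟨hA, hB, hC, hNL, hLM⟩ := P
    simp only [decide_eq_true_eq]
    rw [show (M : ℤ) = A + B + C - 1 by omega, x.HD_north (by omega) (by omega) (by omega) (by omega),
      x.HD_north (by omega) (by omega) (by omega) (by omega)]
    omega
  vertexRule n m h1 h2 h3 h4 := by
    obtain ⟨hA, hB, hC, hNL, hLM⟩ := P
    have hA0 : 0 ≤ A := by omega
    simp only [decide_eq_true_eq, decide_eq_false_iff_not]
    have a1 := x.HD_diag hA0 n m
    have a2 := x.HD_anti hA0 n m
    have a3 := x.HD_adiag hA0 n m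
    have a4 := x.HD_anti hA0 (n - 1) m
    have a5 := x.HD_mono hA0 n m
    have b1 : n = L → x.HD n m = A := fun h => x.HD_full hA0 (by omega) _
    have b2 : n = L → x.HD n (m - 1) = A := fun h => x.HD_full hA0 (by omega) _
    have b3 : n = 1 → x.HD (n - 1) m = 0 := fun h => x.HD_zero hA0 (by omega) _
    have b4 : n = 1 → x.HD (n - 1) (m - 1) = 0 := fun h => x.HD_zero hA0 (by omega) _
    omega

theorem H_ofPP (P : Par L M N A B C) (x : PP A B C) {n m : ℤ}
    (hn0 : 0 ≤ n) (hnL : n ≤ L) (hm0 : 0 ≤ m) (hmM : m ≤ M) :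
    H (ofPP P x) n m = x.HD n m := by
  have hA0 : 0 ≤ A := by have := P.hA; omega
  refine H_unique _ m (fun n => x.HD n m) (x.HD_zero hA0 le_rfl m) L ?_ n hn0 hnL
  intro n h1 h2
  have a1 := x.HD_mono hA0 n m
  have a2 := x.HD_adiag hA0 n (m + 1)
  have a3 := x.HD_anti hA0 (n - 1) (m + 1)
  simp only [add_sub_cancel_right] at a2 a3
  simp only [ofPP, decide_eq_true_eq]
  split_ifs <;> omega

theorem config_ext (c d : FourVertexConfig L M N) (h : c.h = d.h) (v : c.v = d.v) : c = d := by
  cases c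
  cases d
  simp only at h v
  subst h v
  rfl

/-- Configurations are equivalent to plane partitions. -/
noncomputable def ppEquiv (P : Par L M N A B C) : FourVertexConfig L M N ≃ PP A B C where
  toFun := toPP P
  invFun := ofPP P
  left_inv c := by
    apply config_ext
    · funext ⟨n, m⟩
      rw [Bool.eq_iff_iff]
      simp only [ofPP, decide_eq_true_eq]
      by_cases hb : 1 ≤ n ∧ n < (L : ℤ) ∧ 1 ≤ m ∧ m ≤ (M : ℤ)
      · rw [HD_toPP P c (by omega) (by omega) (by omega) (by omega),
          HD_toPP P c (by omega) (by omega) (by omega) (by omega)]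
        have := H_time c (m := m) (by omega) (by omega) n
        split_ifs at this with hh <;> simp only [hh] <;> simp <;> omega
      · rw [c.h_support n m (by omega)]
        simp
        omega
    · funext ⟨n, m⟩
      rw [Bool.eq_iff_iff]
      simp only [ofPP, decide_eq_true_eq]
      by_cases hb : 1 ≤ n ∧ n ≤ (L : ℤ) ∧ 0 ≤ m ∧ m ≤ (M : ℤ)
      · rw [HD_toPP P c (by omega) (by omega) (by omega) (by omega),
          HD_toPP P c (by omega) (by omega) (by omega) (by omega)]
        have := H_step c n m
        split_ifs at this with hh <;> simp only [hh] <;> simp <;> omega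
      · rw [c.v_support n m (by omega)]
        simp
        omega
  right_inv x := by
    have P' := P
    obtain ⟨hA, hB, hC, hNL, hLM⟩ := P'
    apply PP.ext_box
    intro i j k h1 h2 h3 h4 h5 h6
    unfold toPP
    rw [PP.ofBox_D h1 h2 h3 h4 h5 h6,
      H_ofPP P x (by omega) (by omega) (by omega) (by omega), x.le_HD h1 h2]
    unfold PP.E
    rw [show i + j - 1 + 1 - i = j by ring,
      show k + A - i + j - 1 - A + 2 * i - (i + j - 1) = k by ring]

end equiv

section events
variable {L M N : ℕ} (c : FourVertexConfig L M N)

theorem isC_iff {m : ℤ} (h1 : 1 ≤ m) (h2 : m ≤ M) (n : ℤ) :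
    isC c (n, m) = true ↔
      (H c n (m - 1) - H c (n - 1) (m - 1)) + (H c n m - H c (n - 1) m) = 1 := by
  rw [H_step c n m, H_step c n (m - 1)]
  unfold isC
  rcases rule c (n := n) h1 h2 with h | h | h | h <;> obtain ⟨a, b, d, e⟩ := h <;>
    simp [a, b, d, e]

theorem isA_iff {m : ℤ} (h1 : 1 ≤ m) (h2 : m ≤ M) (n : ℤ) :
    isA c (n, m) = true ↔
      H c n (m - 1) = H c (n - 1) (m - 1) ∧ H c n m = H c (n - 1) m ∧ H c n (m - 1) = H c n m := by
  rw [H_time c h1 h2 n, H_time c h1 h2 (n - 1), H_step c n m]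
  unfold isA
  rcases rule c (n := n) h1 h2 with h | h | h | h <;> obtain ⟨a, b, d, e⟩ := h <;>
    simp [a, b, d, e]

theorem afp_event (hNL : N ≤ L) (hLM : L ≤ M) (p : ℤ) (hp1 : 1 ≤ p) (hp2 : p ≤ (L : ℤ) - N)
    (T : ℤ) (hT : T = (M : ℤ) - L + N + p) (r : ℕ) :
    (2 * (r : ℤ) ≤ T → ((∀ m : ℤ, T - 2 * r + 1 ≤ m → m ≤ T → isC c (p, m) = true) ↔
      (r : ℤ) ≤ H c (p - 1) (T - 2 * r))) ∧
    (2 * (r : ℤ) + 1 ≤ T → ((∀ m : ℤ, T - 2 * r ≤ m → m ≤ T → isC c (p, m) = true) ↔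
      (r : ℤ) + 1 ≤ H c p (T - 2 * r - 1))) := by
  have U1 : ∀ u : ℕ, 2 * (u : ℤ) ≤ T → H c p (T - 2 * u) ≤ u := by
    intro u hu
    have := H_upper c hNL ((L : ℤ) - N - p + u).toNat u (by omega)
    rw [show (((L : ℤ) - N - p + u).toNat : ℤ) = (L : ℤ) - N - p + u by omega] at this
    rw [show (L : ℤ) - N - ((L : ℤ) - N - p + u) + u = p by ring,
      show (M : ℤ) - ((L : ℤ) - N - p + u) - u = T - 2 * u by omega] at this
    exact this
  have U2 : ∀ u : ℕ, 2 * (u : ℤ) + 1 ≤ T → H c (p - 1) (T - 2 * u - 1) ≤ u := by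
    intro u hu
    have := H_upper c hNL ((L : ℤ) - N - p + 1 + u).toNat u (by omega)
    rw [show (((L : ℤ) - N - p + 1 + u).toNat : ℤ) = (L : ℤ) - N - p + 1 + u by omega] at this
    rw [show (L : ℤ) - N - ((L : ℤ) - N - p + 1 + u) + u = p - 1 by ring,
      show (M : ℤ) - ((L : ℤ) - N - p + 1 + u) - u = T - 2 * u - 1 by omega] at this
    exact this
  have stepOdd : ∀ r : ℕ,
      (2 * (r : ℤ) ≤ T → ((∀ m : ℤ, T - 2 * r + 1 ≤ m → m ≤ T → isC c (p, m) = true) ↔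
        (r : ℤ) ≤ H c (p - 1) (T - 2 * r))) →
      (2 * (r : ℤ) + 1 ≤ T → ((∀ m : ℤ, T - 2 * r ≤ m → m ≤ T → isC c (p, m) = true) ↔
        (r : ℤ) + 1 ≤ H c p (T - 2 * r - 1))) := by
    intro r ih hr
    have ih := ih (by omega)
    have split : (∀ m : ℤ, T - 2 * r ≤ m → m ≤ T → isC c (p, m) = true) ↔
        (∀ m : ℤ, T - 2 * r + 1 ≤ m → m ≤ T → isC c (p, m) = true) ∧
          isC c (p, T - 2 * r) = true := by
      constructor
      · intro h
        exact ⟨fun m h1 h2 => h m (by omega) h2, h _ le_rfl (by omega)⟩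
      · rintro ⟨h, hneg⟩ m h1 h2
        by_cases hm : m = T - 2 * r
        · rw [hm]; exact hneg
        · exact h m (by omega) h2
    rw [split, ih, isC_iff c (by omega) (by omega)]
    have m1 : 1 ≤ T - 2 * (r : ℤ) := by omega
    have m2 : T - 2 * (r : ℤ) ≤ M := by omega
    have a1 := U1 r (by omega)
    have a2 := U2 r hr
    have a3 := H_adiag c m1 m2 p
    have a4 := H_mono c p (T - 2 * r)
    have a5 := H_lip c p (T - 2 * r - 1)
    have a6 := H_anti c m1 m2 (p - 1)
    constructor
    · rintro ⟨h1, h2⟩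
      omega
    · intro h
      constructor <;> omega
  have stepEven : ∀ r : ℕ,
      (2 * (r : ℤ) + 1 ≤ T → ((∀ m : ℤ, T - 2 * r ≤ m → m ≤ T → isC c (p, m) = true) ↔
        (r : ℤ) + 1 ≤ H c p (T - 2 * r - 1))) →
      (2 * (r : ℤ) + 2 ≤ T → ((∀ m : ℤ, T - 2 * r - 1 ≤ m → m ≤ T → isC c (p, m) = true) ↔
        (r : ℤ) + 1 ≤ H c (p - 1) (T - 2 * r - 2))) := by
    intro r ih hr
    have ih := ih (by omega)
    have split : (∀ m : ℤ, T - 2 * r - 1 ≤ m → m ≤ T → isC c (p, m) = true) ↔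
        (∀ m : ℤ, T - 2 * r ≤ m → m ≤ T → isC c (p, m) = true) ∧
          isC c (p, T - 2 * r - 1) = true := by
      constructor
      · intro h
        exact ⟨fun m h1 h2 => h m (by omega) h2, h _ le_rfl (by omega)⟩
      · rintro ⟨h, hneg⟩ m h1 h2
        by_cases hm : m = T - 2 * r - 1
        · rw [hm]; exact hneg
        · exact h m (by omega) h2
    rw [split, ih, isC_iff c (by omega) (by omega)]
    have m1 : 1 ≤ T - 2 * (r : ℤ) - 1 := by omega
    have m2 : T - 2 * (r : ℤ) - 1 ≤ M := by omega
    have a1 := U1 (r + 1) (by push_cast; omega)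
    have a2 := U2 r (by omega)
    have a3 := H_diag c m1 m2 p
    have a4 := H_mono c p (T - 2 * r - 1 - 1)
    have a5 := H_lip c p (T - 2 * r - 1)
    have a6 := H_anti c m1 m2 p
    have e : T - 2 * ((r + 1 : ℕ) : ℤ) = T - 2 * r - 1 - 1 := by push_cast; ring
    have e' : T - 2 * (r : ℤ) - 2 = T - 2 * r - 1 - 1 := by ring
    rw [e] at a1
    rw [e']
    push_cast at a1
    constructor
    · rintro ⟨h1, h2⟩
      omega
    · intro h
      constructor <;> omega
  induction r with
  | zero =>
    have ev : 2 * ((0 : ℕ) : ℤ) ≤ T → ((∀ m : ℤ, T - 2 * (0 : ℕ) + 1 ≤ m → m ≤ T →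
        isC c (p, m) = true) ↔ ((0 : ℕ) : ℤ) ≤ H c (p - 1) (T - 2 * (0 : ℕ))) := by
      intro _
      refine iff_of_true (fun m h1 h2 => ?_) (by simpa using H_nonneg c _ _)
      simp at h1
      omega
    exact ⟨ev, stepOdd 0 ev⟩
  | succ r ih =>
    have ev : 2 * ((r + 1 : ℕ) : ℤ) ≤ T → ((∀ m : ℤ, T - 2 * (r + 1 : ℕ) + 1 ≤ m → m ≤ T →
        isC c (p, m) = true) ↔ ((r + 1 : ℕ) : ℤ) ≤ H c (p - 1) (T - 2 * (r + 1 : ℕ))) := by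
      intro h
      have := stepEven r ih.2 (by push_cast at h; omega)
      rw [show T - 2 * ((r + 1 : ℕ) : ℤ) + 1 = T - 2 * r - 1 by push_cast; ring,
        show T - 2 * ((r + 1 : ℕ) : ℤ) = T - 2 * r - 2 by push_cast; ring]
      push_cast
      exact this
    exact ⟨ev, stepOdd (r + 1) ev⟩

theorem efp_event (hNL : N ≤ L) (hLM : L ≤ M) (r : ℤ) (hr1 : 1 ≤ r) (hrL : r ≤ L)
    (m₀ : ℤ) (h0 : 0 ≤ m₀) (hM : m₀ < M) (hm : m₀ < (M : ℤ) - L + N + r) :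
    (∀ m : ℤ, m₀ + 1 ≤ m → m ≤ (M : ℤ) - L + N + r → isA c (r, m) = true) ↔ ¬ 1 ≤ H c r m₀ := by
  constructor
  · intro h
    by_cases hr : r ≤ (L : ℤ) - N
    · have key : ∀ m : ℤ, m₀ ≤ m → m ≤ (M : ℤ) - L + N + r → H c r m = H c r m₀ := by
        intro m hm1
        induction m, hm1 using Int.leInduction with
        | base => intro _; rfl
        | succ k hk ih =>
          intro hk2
          have := ((isA_iff c (m := k + 1) (by omega) (by omega) r).1
            (h (k + 1) (by omega) hk2)).2.2
          simp only [add_sub_cancel_right] at this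
          rw [← this, ih (by omega)]
      have k1 := key ((M : ℤ) - L + N + r) hm.le le_rfl
      have := H_upper c hNL ((L : ℤ) - N - r).toNat 0 (by omega)
      rw [show (((L : ℤ) - N - r).toNat : ℤ) = (L : ℤ) - N - r by omega,
        show (L : ℤ) - N - ((L : ℤ) - N - r) + (0 : ℕ) = r by push_cast; ring,
        show (M : ℤ) - ((L : ℤ) - N - r) - (0 : ℕ) = M - L + N + r by push_cast; ring] at this
      push_cast at this
      omega
    · exfalso
      have h1 := ((isA_iff c (m := M) (by omega) le_rfl r).1 (h M (by omega) (by omega))).2.1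
      rw [H_north c hNL (by omega) (by omega), H_north c hNL (by omega) (by omega)] at h1
      omega
  · intro h m h1 h2
    by_cases hr : r ≤ (L : ℤ) - N
    · rw [isA_iff c (by omega) (by omega)]
      have a1 := H_anti_le c (m := m₀) (m' := m) (by omega) h0 (by omega) r
      have a2 := H_anti_le c (m := m₀) (m' := m - 1) (by omega) h0 (by omega) r
      have a3 := H_mono c r m
      have a4 := H_mono c r (m - 1)
      have b1 := H_nonneg c (r - 1) m
      have b2 := H_nonneg c (r - 1) (m - 1)
      omega
    · exfalso
      have a1 := H_anti_le c (m := m₀) (m' := M) (by omega) h0 le_rfl r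
      rw [H_north c hNL (by omega) (by omega)] at a1
      omega

end events

theorem card_sub {α β : Type} (e : α ≃ β) (p : α → Prop) (q : β → Prop)
    (h : ∀ a, p a ↔ q (e a)) : Nat.card {a // p a} = Nat.card {b // q b} :=
  Nat.card_congr (e.subtypeEquiv h)

end FV

/-- AFP expressed through EFP:
`G_{L,M,N}(p,q) = F_{M-L+N+1, M, M-L+1}(r̃, L-p̃)`, where `q̃ = p+q-L+N`,
`r̃ = ⌊(q̃+1)/2⌋` and `p̃ = p - ((q̃+1) mod 2)`. -/
theorem afp_eq_efp (L M N p q : ℕ)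
    (hN : 1 ≤ N) (hNL : N < L) (hLM : L ≤ M)
    (hp1 : 1 ≤ p) (hp2 : p ≤ L - N) (hq1 : L - N < p + q) (hq2 : p + q ≤ M - N) :
    AFP L M N p q =
      EFP (M - L + N + 1) M (M - L + 1)
        ((p + q + N - L + 1) / 2)
        (L - (p - ((p + q + N - L + 1) % 2))) := by
  obtain ⟨r, hr⟩ : ∃ r, r = (p + q + N - L + 1) / 2 := ⟨_, rfl⟩
  obtain ⟨t, ht⟩ : ∃ t, t = p - ((p + q + N - L + 1) % 2) := ⟨_, rfl⟩
  obtain ⟨L', hL'⟩ : ∃ L', L' = M - L + N + 1 := ⟨_, rfl⟩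
  obtain ⟨N', hN'⟩ : ∃ N', N' = M - L + 1 := ⟨_, rfl⟩
  rw [← hr, ← ht, ← hL', ← hN']
  have P : FV.Par L M N (N : ℤ) ((L : ℤ) - N) ((M : ℤ) - L + 1) := ⟨rfl, rfl, rfl, hNL.le, hLM⟩
  have P' : FV.Par L' M N' ((M : ℤ) - L + 1) (N : ℤ) ((L : ℤ) - N) :=
    ⟨by omega, by omega, by omega, by omega, by omega⟩
  have hA0 : (0 : ℤ) ≤ N := by omega
  have hB0 : (0 : ℤ) ≤ (L : ℤ) - N := by omega
  have hC0 : (0 : ℤ) ≤ (M : ℤ) - L + 1 := by omega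
  let e : FourVertexConfig L M N ≃ FourVertexConfig L' M N' :=
    (FV.ppEquiv P).trans ((FV.PP.rotEquiv hA0 hB0 hC0).trans (FV.ppEquiv P').symm)
  unfold AFP EFP
  rw [Nat.card_congr e]
  congr 2
  apply FV.card_sub e
  intro c
  have hr1 : 1 ≤ r := by omega
  have htp : t ≤ p := by omega
  -- the event on the left
  have ev1 : (∀ m : ℤ, (M : ℤ) - q + 1 ≤ m → m ≤ (M : ℤ) - L + N + p →
      isC c ((p : ℤ), m) = true) ↔ (r : ℤ) ≤ FV.H c t ((M : ℤ) - q) := by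
    have key := FV.afp_event c hNL.le hLM p (by omega) (by omega) _ rfl
    rcases Nat.mod_two_eq_zero_or_one (p + q + N - L + 1) with hmod | hmod
    · have k := (key (r - 1)).2 (by omega)
      rw [show (M : ℤ) - L + N + p - 2 * ((r - 1 : ℕ) : ℤ) = (M : ℤ) - q + 1 by omega,
        show (((r - 1 : ℕ) : ℤ)) + 1 = r by omega, add_sub_cancel_right] at k
      rw [show (t : ℤ) = p by omega]
      exact k
    · have k := (key r).1 (by omega)
      rw [show (M : ℤ) - L + N + p - 2 * (r : ℤ) = (M : ℤ) - q by omega] at k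
      rw [show (t : ℤ) = p - 1 by omega]
      exact k
  have ev2 := FV.efp_event (e c) P'.hNL P'.hLM r (by omega) (by omega) ((M : ℤ) - L + t)
    (by omega) (by omega) (by omega)
  rw [ev1, show (M : ℤ) - (L - t : ℕ) + 1 = (M : ℤ) - L + t + 1 by omega, ev2]
  have hpp : FV.toPP P' (e c) = FV.PP.rot hA0 hB0 hC0 (FV.toPP P c) :=
    (FV.ppEquiv P').apply_symm_apply _
  have i2 := FV.toPP_iff P' (e c) (i := 1) (n := r) (m := (M : ℤ) - L + t) le_rfl
    (by omega) (by omega) (by omega) (by omega) (by omega)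
  rw [← i2, hpp]
  unfold FV.PP.E
  rw [show (r : ℤ) + 1 - 1 = r by ring,
    show (M : ℤ) - L + t - ((M : ℤ) - L + 1) + 2 * 1 - r = (t : ℤ) + 1 - r by ring]
  have hle : FV.H c t ((M : ℤ) - q) ≤ t := FV.H_le_self c (by omega) _
  have hleN : FV.H c t ((M : ℤ) - q) ≤ N :=
    FV.H_le_N c hNL.le (by omega) (by omega) (by omega)
  by_cases c1 : N < r
  · exact iff_of_false (by omega) (not_not_intro (FV.PP.j_hi _ _ _ _ le_rfl (by omega) (by omega)))
  by_cases c2 : t < r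
  · exact iff_of_false (by omega) (not_not_intro
      (FV.PP.k_lo _ _ _ _ le_rfl (by omega) (by omega) (by omega) (by omega)))
  unfold FV.PP.rot
  rw [FV.PP.ofBox_D le_rfl (by omega) (by omega) (by omega) (by omega) (by omega), not_not]
  have i1 := FV.toPP_iff P c (i := r) (n := t) (m := (M : ℤ) - q) (by omega)
    (by omega) (by omega) (by omega) (by omega) (by omega)
  rw [← i1]
  unfold FV.PP.E
  rw [show (M : ℤ) - q - N + 2 * r - t = (M : ℤ) - L + 1 + 1 - 1 by omega]
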